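/- Let p ≥ 5 be a prime. Then for every integer r ≥ 1: A((p^r − 1)/2) ≡ A((p − 1)/2)^r (mod p²). -/

import Mathlib

/-!
Write `p = 2m + 1`. It suffices to show `A(m + pN) ≡ A(m) A(N)` modulo `p²` for `N = (p^r - 1)/2`,
and to induct on `r`, because `(p^(r+1) - 1)/2 = m + pN`.

Split the summation index as `k = a + pb` with `0 ≤ a < p`. If `a > m`, then `p` divides
`C(m + pN, k)` and the term vanishes modulo `p²`. If `a ≤ m`, neither binomial coefficient has a
carry, and `choose_mod_p_sq` expands the term as
`C(N,b)² C(N+b,b) · c_a (1 + p (N u_a + b v_a))`, where `c_a = C(m,a)² C(m+a,a)` and `u_a`, `v_a`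
are combinations of harmonic numbers. Two sums remain.

* `p ∑ c_a v_a = 0` (`sum_harm_eq_zero`): up to a unit, `c_a v_a` is modulo `p` the value at `a` of
  the derivative of the polynomial `((t+1)⋯(t+m))³`, and the sum over `𝔽_p` of a derivative of such
  low degree vanishes.
* `p ∑ c_a u_a = A(m) - (-1)^m A(m)` (`sum_index_derivative`): the polynomial
  `Q(y) = ∑ C(m,a) C(m+a,a) C(y,a)` satisfies `Q(-1-y) = (-1)^m Q(y)`, and `-1 - m = m - p`.

Hence `A(m + pN) ≡ A(N) (A(m) + N (1 - (-1)^m) A(m))` (`apA_add_mul`). For even `m` this is the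
claim. For odd `m`, `2 A(m)` is a multiple of `p`; as `A(N) ≡ A(m)^r` with `r ≥ 1`, the extra term
contains `2 A(m)² ≡ 0`.
-/

/-- The Apéry numbers `A(n) = ∑_{k=0}^{n} C(n,k)² C(n+k,k)`. -/
def apA (n : ℕ) : ℤ :=
  ∑ k ∈ Finset.range (n + 1), (n.choose k : ℤ) ^ 2 * ((n + k).choose k : ℤ)

/-! ### A reflection identity -/

/-- The polynomial `Q(y) = ∑ C(m,a) C(m+a,a) C(y,a)` satisfies `Q(-1-y) = (-1)^m Q(y)`; this is the
case `y = m`, where `C(-1-m,a) = (-1)^a C(m+a,a)`. One factor `C(m+a,a)` on the left is expanded by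
Vandermonde, after which the sum over `a` is an iterated forward difference. -/
theorem legendre_reflection (m : ℕ) :
    ∑ a ∈ Finset.range (m + 1), (-1 : ℤ) ^ a * m.choose a * ((m + a).choose a : ℤ) ^ 2 =
      (-1) ^ m * ∑ a ∈ Finset.range (m + 1),
        (m.choose a : ℤ) ^ 2 * ((m + a).choose a : ℤ) := by
  have inner : ∀ j ∈ Finset.range (m + 1),
      ∑ a ∈ Finset.range (m + 1),
        (-1 : ℤ) ^ a * m.choose a * ((m + a).choose a : ℤ) * a.choose j =
        (-1) ^ m * (m.choose j * (m + j).choose j) := by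
    intro j hj
    obtain ⟨M, rfl⟩ : ∃ M, m = j + M := ⟨m - j, by simp at hj; omega⟩
    have hd := congrFun (fwdDiff_iter_choose j M) (j + M + j)
    rw [fwdDiff_iter_eq_sum_shift] at hd
    rw [add_assoc, Finset.sum_range_add, Finset.sum_eq_zero, zero_add]
    · rw [← hd, Finset.mul_sum, Finset.mul_sum]
      refine Finset.sum_congr rfl fun i hi => ?_
      have h1 : (j + M).choose (j + i) * (j + i).choose j = (j + M).choose j * M.choose i := by
        rw [Nat.choose_mul (by omega)]; simp
      have h2 : (j + M + (j + i)).choose (j + i) = (j + M + j + i • 1).choose (M + j) := by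
        rw [Nat.choose_symm_of_eq_add (b := j + M) (by omega)]
        simp [add_assoc, add_comm j M]
      have h3 : (-1 : ℤ) ^ (j + M) * (-1) ^ (M - i) = (-1) ^ (j + i) := by
        have : i ≤ M := by simp at hi; omega
        obtain ⟨l, rfl⟩ := Nat.exists_eq_add_of_le this
        simp only [Nat.add_sub_cancel_left, ← pow_add]
        rw [show j + (i + l) + l = j + i + 2 * l by ring, pow_add, pow_mul]; simp
      rw [h2, ← h3, smul_eq_mul]
      have h1' : ((j + M).choose (j + i) : ℤ) * (j + i).choose j
        = (j + M).choose j * M.choose i := by exact_mod_cast h1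
      linear_combination (-1 : ℤ) ^ (j + M) * (-1) ^ (M - i) *
        ((j + M + j + i • 1).choose (M + j) : ℤ) * h1'
    · intro a ha
      rw [Nat.choose_eq_zero_of_lt (n := a) (by simpa using ha)]; simp
  have vander : ∀ a ∈ Finset.range (m + 1), ((m + a).choose a : ℤ) =
      ∑ j ∈ Finset.range (m + 1), (m.choose j : ℤ) * a.choose j := by
    intro a ha
    have ham : a ≤ m := by simp at ha; omega
    have h := Nat.add_choose_eq m a a
    rw [Finset.Nat.sum_antidiagonal_eq_sum_range_succ
      (fun i j => m.choose i * a.choose j)] at h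
    rw [h]
    push_cast
    rw [← Finset.sum_subset (Finset.range_subset_range.2 (Nat.succ_le_succ ham))]
    · refine Finset.sum_congr rfl fun j hj => ?_
      rw [Nat.choose_symm (by simp at hj; omega)]
    · intro j _ hj
      rw [Nat.choose_eq_zero_of_lt (n := a) (by simpa using hj)]; simp
  calc _ = ∑ a ∈ Finset.range (m + 1), ∑ j ∈ Finset.range (m + 1), (m.choose j : ℤ) *
        ((-1 : ℤ) ^ a * m.choose a * ((m + a).choose a : ℤ) * a.choose j) := by
        refine Finset.sum_congr rfl fun a ha => ?_
        rw [sq]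
        nth_rewrite 2 [vander a ha]
        simp only [Finset.mul_sum]
        exact Finset.sum_congr rfl fun j _ => by ring
    _ = _ := by
        rw [Finset.sum_comm, Finset.mul_sum]
        refine Finset.sum_congr rfl fun j hj => ?_
        rw [← Finset.mul_sum, inner j hj]; ring

/-! ### Arithmetic modulo `p²` -/

theorem sum_range_mul_split {R : Type*} [AddCommMonoid R] (f : ℕ → R) (p N : ℕ) :
    ∑ k ∈ Finset.range (p * N), f k =
      ∑ b ∈ Finset.range N, ∑ a ∈ Finset.range p, f (a + p * b) := by
  induction N with
  | zero => simp
  | succ N ih =>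
    rw [mul_add_one, Finset.sum_range_add, ih, Finset.sum_range_succ]
    simp only [add_comm]

theorem p_mul_eq_zero {p : ℕ} {x : ℤ} (h : (p : ℤ) ∣ x) : (p : ZMod (p ^ 2)) * x = 0 := by
  obtain ⟨y, rfl⟩ := h
  have : ((p ^ 2 : ℕ) : ZMod (p ^ 2)) = 0 := ZMod.natCast_self _
  push_cast at this ⊢
  linear_combination (y : ZMod (p ^ 2)) * this

theorem p_sq {p : ℕ} : (p : ZMod (p ^ 2)) ^ 2 = 0 := by
  exact_mod_cast ZMod.natCast_self (p ^ 2)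

theorem mul_inv_p {p : ℕ} (hp : p.Prime) {i : ℕ} (h0 : 0 < i) (hi : i < p) :
    (i : ZMod (p ^ 2)) * (i : ZMod (p ^ 2))⁻¹ = 1 :=
  ZMod.coe_mul_inv_eq_one _
    (Nat.Coprime.pow_right _ (Nat.Coprime.symm ((Nat.Prime.coprime_iff_not_dvd hp).2
      (Nat.not_dvd_of_pos_of_lt h0 hi))))

theorem isUnit_factorial_p {p : ℕ} (hp : p.Prime) {i : ℕ} (hi : i < p) :
    IsUnit (i.factorial : ZMod (p ^ 2)) :=
  (ZMod.isUnit_iff_coprime _ _).2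
    (Nat.Coprime.pow_right _ (hp.coprime_factorial_of_lt hi).symm)

/-- Modulo `p²`, `C(pN, pb) ≡ C(N, b)`: in the Vandermonde expansion of `C(p + pN, pb)`, all terms
but the two extreme ones are products of two multiples of `p`. -/
theorem choose_p_mul {p : ℕ} (hp : p.Prime) (N b : ℕ) :
    ((p * N).choose (p * b) : ZMod (p ^ 2)) = N.choose b := by
  have := Fact.mk hp
  induction N generalizing b with
  | zero =>
    rcases b with _ | b
    · simp
    · rw [Nat.choose_eq_zero_of_lt (by simp [hp.pos])]; simp
  | succ N ih =>
    rcases b with _ | b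
    · simp
    rw [show p * (N + 1) = p + p * N by ring, Nat.add_choose_eq]
    have hp0 := hp.pos
    push_cast
    rw [Finset.sum_eq_add_of_mem (0, p * (b + 1)) (p, p * b) (by simp)
      (by simp; ring) (by simp; omega)]
    · simp [ih, Nat.choose_succ_succ, add_comm]
    · rintro ⟨i, j⟩ hij ⟨h1, h2⟩
      rw [Finset.HasAntidiagonal.mem_antidiagonal] at hij
      rw [ne_eq, Prod.mk.injEq, not_and] at h1 h2
      have hi0 : i ≠ 0 := fun h => h1 h (by omega)
      have hip : i ≠ p := fun h => h2 h (by subst h; rw [mul_add_one] at hij; omega)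
      rcases lt_or_gt_of_ne hip with hlt | hgt
      · obtain ⟨x, hx⟩ := hp.dvd_choose_self hi0 hlt
        have hj : ¬ p ∣ j := fun h => by
          have : p ∣ i := (Nat.dvd_add_left h).1 (hij ▸ Dvd.intro _ rfl)
          exact absurd (Nat.le_of_dvd (by omega) this) (by omega)
        have hd : p ∣ (p * N).choose j := by
          rw [← Nat.modEq_zero_iff_dvd]
          refine (Choose.choose_modEq_choose_mod_mul_choose_div_nat).trans ?_
          rw [Nat.mul_mod_right, Nat.choose_eq_zero_of_lt, zero_mul]
          exact Nat.pos_of_ne_zero fun h => hj (Nat.dvd_of_mod_eq_zero h)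
        rw [hx]; push_cast; rw [mul_assoc]
        exact_mod_cast p_mul_eq_zero (Int.natCast_dvd_natCast.2 (dvd_mul_of_dvd_right hd x))
      · simp [Nat.choose_eq_zero_of_lt hgt]

/-! ### First-order expansions of binomial coefficients -/

/-- The harmonic number `H_k = 1 + 1/2 + ⋯ + 1/k` in `ℤ/p²`. The inverses are genuine only for
`k < p`; at a nonunit, `ZMod` inversion returns a junk value. -/
def harm (p k : ℕ) : ZMod (p ^ 2) :=
  ∑ i ∈ Finset.range k, ((i + 1 : ℕ) : ZMod (p ^ 2))⁻¹

theorem harm_succ (p k : ℕ) :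
    harm p (k + 1) = harm p k + ((k + 1 : ℕ) : ZMod (p ^ 2))⁻¹ :=
  Finset.sum_range_succ _ _

theorem ascFactorial_p {p : ℕ} (hp : p.Prime) (z : ℕ) {k : ℕ} (hk : k < p) :
    ((p * z + 1).ascFactorial k : ZMod (p ^ 2)) = k.factorial * (1 + p * z * harm p k) := by
  induction k with
  | zero => simp [harm]
  | succ k ih =>
    have hu := mul_inv_p hp (Nat.succ_pos k) hk
    rw [Nat.succ_eq_add_one] at hu
    rw [Nat.ascFactorial_succ, Nat.factorial_succ, harm_succ, Nat.cast_mul, ih (by omega)]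
    generalize ((k + 1 : ℕ) : ZMod (p ^ 2))⁻¹ = v at *
    push_cast at hu ⊢
    linear_combination (k.factorial : ZMod (p ^ 2)) * z ^ 2 * harm p k * p_sq (p := p) -
      (k.factorial : ZMod (p ^ 2)) * p * z * hu

/-- Refinement of Lucas' congruence to modulus `p²` when there is no carry in the last digit: with
`M = a + c` and `N = b + d`,
`C(M + pN, a + pb) ≡ C(N,b) C(M,a) (1 + p (N H_M - b H_a - (N-b) H_{M-a}))`. -/
theorem choose_mod_p_sq {p : ℕ} (hp : p.Prime) {a c : ℕ} (b d : ℕ) (hac : a + c < p) :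
    ((a + c + p * (b + d)).choose (a + p * b) : ZMod (p ^ 2)) =
      (b + d).choose b * (a + c).choose a *
        (1 + p * ((b + d) * harm p (a + c) - b * harm p a - d * harm p c)) := by
  have exact1 : (a + c + p * (b + d)).choose (a + p * b) *
      ((p * b + 1).ascFactorial a * (p * d + 1).ascFactorial c) =
      (p * (b + d)).choose (p * b) * (p * (b + d) + 1).ascFactorial (a + c) := by
    have e1 := Nat.add_choose_mul_factorial_mul_factorial (p * d + c) (p * b + a)
    have e2 := Nat.add_choose_mul_factorial_mul_factorial (p * d) (p * b)
    rw [← Nat.factorial_mul_ascFactorial, ← Nat.factorial_mul_ascFactorial] at e1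
    rw [show p * d + c + (p * b + a) = p * (b + d) + (a + c) by ring,
      ← Nat.factorial_mul_ascFactorial (p * (b + d))] at e1
    rw [show p * d + p * b = p * (b + d) by ring] at e2
    rw [show a + c + p * (b + d) = p * (b + d) + (a + c) by ring, add_comm a (p * b)]
    have hpos : 0 < (p * d).factorial * (p * b).factorial := by positivity
    apply Nat.eq_of_mul_eq_mul_left hpos
    rw [← e2] at e1
    linarith
  have e3 := Nat.add_choose_mul_factorial_mul_factorial c a
  have h := congrArg (Nat.cast (R := ZMod (p ^ 2))) exact1
  have e3' := congrArg (Nat.cast (R := ZMod (p ^ 2))) e3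
  rw [add_comm c a] at e3'
  push_cast at h e3'
  rw [choose_p_mul hp, ascFactorial_p hp b (by omega : a < p),
    ascFactorial_p hp d (by omega : c < p), ascFactorial_p hp (b + d) hac, ← e3'] at h
  have ua := isUnit_factorial_p hp (by omega : a < p)
  have uc := isUnit_factorial_p hp (by omega : c < p)
  have hsq := p_sq (p := p)
  generalize ((a + c + p * (b + d)).choose (a + p * b) : ZMod (p ^ 2)) = T at *
  generalize (a.factorial : ZMod (p ^ 2)) = fa at *
  generalize (c.factorial : ZMod (p ^ 2)) = fc at *
  generalize ((b + d).choose b : ZMod (p ^ 2)) = B at *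
  generalize ((a + c).choose a : ZMod (p ^ 2)) = C at *
  have h2 : T * (1 + p * b * harm p a) * (1 + p * d * harm p c) =
      B * C * (1 + p * (b + d) * harm p (a + c)) := by
    apply (ua.mul uc).mul_left_cancel
    push_cast at h
    linear_combination h
  generalize harm p a = x at *
  generalize harm p c = y at *
  generalize harm p (a + c) = w at *
  generalize (p : ZMod (p ^ 2)) = e at *
  -- Since `e² = 0`, this inverts the two factors next to `T` in `h2`.
  have h3 : (1 + e * b * x) * (1 + e * d * y) * (1 - e * (b * x + d * y)) = 1 := by
    linear_combination (-(b * x + d * y) ^ 2 + b * x * d * y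
      - e * b * x * d * y * (b * x + d * y)) * hsq
  linear_combination (1 - e * (b * x + d * y)) * h2 - T * h3 -
    B * C * (b + d) * w * (b * x + d * y) * hsq

/-- With `p = 2m + 1`, this is the expansion of `C(-1-m, a) = C(m - p, a)` around `p = 0`, that is,
of `∏_{i < a} (m - i - p) / a!`. -/
theorem neg_one_pow_mul_choose {p m : ℕ} (hp : p.Prime) (hm : p = 2 * m + 1) {a : ℕ}
    (ha : a ≤ m) :
    (-1) ^ a * ((m + a).choose a : ZMod (p ^ 2)) =
      m.choose a * (1 - p * (harm p m - harm p (m - a))) := by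
  induction a with
  | zero => simp
  | succ a ih =>
    have ih := ih (by omega)
    obtain ⟨y, rfl⟩ : ∃ y, m = a + 1 + y := ⟨m - (a + 1), by omega⟩
    have hu := mul_inv_p hp (Nat.succ_pos a) (by omega)
    have hy := mul_inv_p hp (Nat.succ_pos y) (by omega)
    rw [show a + 1 + y - a = y + 1 by omega, harm_succ] at ih
    rw [show a + 1 + y - (a + 1) = y by omega]
    have c1 := Nat.add_one_mul_choose_eq (a + 1 + y + a) a
    have c2 := Nat.choose_succ_right_eq (a + 1 + y) a
    rw [show a + 1 + y - a = y + 1 by omega] at c2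
    have c1' := congrArg (Nat.cast (R := ZMod (p ^ 2))) c1
    have c2' := congrArg (Nat.cast (R := ZMod (p ^ 2))) c2
    have hp' := congrArg (Nat.cast (R := ZMod (p ^ 2))) hm
    have hsq := p_sq (p := p)
    have un : IsUnit (((a + 1 : ℕ)) : ZMod (p ^ 2)) := IsUnit.of_mul_eq_one _ hu
    apply un.mul_left_cancel
    rw [show a + 1 + y + (a + 1) = a + 1 + y + a + 1 by ring]
    rw [Nat.succ_eq_add_one] at hy
    generalize ((y + 1 : ℕ) : ZMod (p ^ 2))⁻¹ = v at *
    push_cast at *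
    rw [pow_succ (-1) a]
    generalize ((a + 1 + y + a).choose a : ZMod (p ^ 2)) = P at *
    generalize ((a + 1 + y + a + 1).choose (a + 1) : ZMod (p ^ 2)) = P' at *
    generalize ((a + 1 + y).choose a : ZMod (p ^ 2)) = Q at *
    generalize ((a + 1 + y).choose (a + 1) : ZMod (p ^ 2)) = Q' at *
    generalize harm p (a + 1 + y) = H at *
    generalize harm p y = h at *
    generalize (-1 : ZMod (p ^ 2)) ^ a = s at *
    generalize (p : ZMod (p ^ 2)) = e at *
    linear_combination s * c1' - (1 - e * (H - h)) * c2' + (y + 1 - e) * ih + s * P * hp'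
      + Q * (H - h - v) * hsq + Q * e * hy

/-- Modulo `p = 2m + 1` the reciprocals of `m + i` and `m + 1 - i` are opposite, so
`H_{m+a} ≡ H_{m-a}`. -/
theorem p_mul_harm_reflect {p m : ℕ} (hp : p.Prime) (hm : p = 2 * m + 1) {a : ℕ}
    (ha : a ≤ m) : (p : ZMod (p ^ 2)) * harm p (m + a) = p * harm p (m - a) := by
  induction a with
  | zero => simp
  | succ a ih =>
    have ih := ih (by omega)
    obtain ⟨y, rfl⟩ : ∃ y, m = a + 1 + y := ⟨m - (a + 1), by omega⟩
    have hu := mul_inv_p hp (i := a + 1 + y + a + 1) (by omega) (by omega)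
    have hy := mul_inv_p hp (Nat.succ_pos y) (by omega)
    rw [show a + 1 + y - a = y + 1 by omega, harm_succ] at ih
    rw [show a + 1 + y - (a + 1) = y by omega, ← add_assoc (a + 1 + y), harm_succ]
    have hp' := congrArg (Nat.cast (R := ZMod (p ^ 2))) hm
    have hsq := p_sq (p := p)
    rw [Nat.succ_eq_add_one] at hy
    generalize ((y + 1 : ℕ) : ZMod (p ^ 2))⁻¹ = v at *
    generalize ((a + 1 + y + a + 1 : ℕ) : ZMod (p ^ 2))⁻¹ = u at *
    push_cast at *
    generalize harm p (a + 1 + y + a) = H at *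
    generalize harm p y = h at *
    generalize (p : ZMod (p ^ 2)) = e at *
    linear_combination ih - e * u * hy - e * v * hu + u * v * hsq - e * u * v * hp'

/-! ### The two first-order terms -/

open Polynomial in
/-- The sum over `𝔽_p` of a polynomial of degree less than `2(p - 1)` is minus its coefficient of
`X^(p-1)`, and a derivative has that coefficient divisible by `p`. -/
theorem dvd_sum_derivative {p : ℕ} (hp : p.Prime) (G : ℤ[X]) (hG : G.natDegree < 2 * p - 1) :
    (p : ℤ) ∣ ∑ a ∈ Finset.range p, (derivative G).eval (a : ℤ) := by
  have := Fact.mk hp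
  have h2 := hp.two_le
  rw [← ZMod.intCast_zmod_eq_zero_iff_dvd]
  have hdeg : (derivative G).natDegree < 2 * p - 2 := by
    by_cases h0 : G.natDegree = 0
    · rw [natDegree_eq_zero.1 h0 |>.choose_spec.symm]; simp; omega
    · have := natDegree_derivative_lt h0; omega
  have hpow : ∀ k, k < 2 * p - 2 → k ≠ p - 1 →
      ∑ a ∈ Finset.range p, (a : ZMod p) ^ k = 0 := by
    intro k hk hk'
    have : ∑ a ∈ Finset.range p, (a : ZMod p) ^ k = ∑ x : ZMod p, x ^ k := by
      refine Finset.sum_nbij' (fun a => (a : ZMod p)) ZMod.val ?_ ?_ ?_ ?_ ?_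
      · simp
      · intro x _; simpa using ZMod.val_lt x
      · intro a ha; exact ZMod.val_cast_of_lt (by simpa using ha)
      · intro x _; simp
      · simp
    rw [this]
    rcases lt_or_ge k (p - 1) with h | h
    · exact FiniteField.sum_pow_lt_card_sub_one _ k (by rwa [ZMod.card])
    · obtain ⟨l, rfl⟩ : ∃ l, k = p + l := ⟨k - p, by omega⟩
      -- `x ^ p = x` lowers the exponent by `p - 1`, and it stays positive.
      rw [← FiniteField.sum_pow_lt_card_sub_one (ZMod p) (l + 1) (by rw [ZMod.card]; omega)]
      refine Finset.sum_congr rfl fun x _ => ?_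
      rw [pow_add, ZMod.pow_card, pow_succ']
  simp only [eval_eq_sum_range' hdeg]
  push_cast
  rw [Finset.sum_comm]
  refine Finset.sum_eq_zero fun k hk => ?_
  rw [← Finset.mul_sum]
  by_cases hk' : k = p - 1
  · rw [coeff_derivative, hk']
    have : ((p - 1 : ℕ) : ZMod p) + 1 = 0 := by
      rw [← Nat.cast_add_one, Nat.sub_add_cancel hp.one_le, ZMod.natCast_self]
    push_cast
    rw [this]; simp
  · rw [hpow k (by simpa using hk) hk', mul_zero]

open Polynomial in
theorem aeval_prod_X_add (m p x : ℕ) :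
    aeval (x : ZMod (p ^ 2)) (∏ i ∈ Finset.range m, (X + C ((i + 1 : ℕ) : ℤ))) =
      ((x + 1).ascFactorial m : ZMod (p ^ 2)) := by
  induction m with
  | zero => simp
  | succ m ih =>
    rw [Finset.prod_range_succ, map_mul, ih, Nat.ascFactorial_succ]
    simp
    ring

open Polynomial in
/-- The coefficient of `b` in the first-order term vanishes. For `W(t) = (t+1)⋯(t+m)` one has
`W(a) = m! C(m+a,a)` and `W'(a) ≡ W(a) (H_{m+a} - H_a)`, while `C(m,a)² ≡ C(m+a,a)²` modulo `p`.
So `m!³` times the `a`-th summand is `p (W³)'(a)`. The values `W(a)` with `m < a < p` are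
divisible by `p`, so the range of summation extends to all residues and `dvd_sum_derivative`
applies. -/
theorem sum_harm_eq_zero {p m : ℕ} (hp : p.Prime) (hm : p = 2 * m + 1) :
    ∑ a ∈ Finset.range (m + 1), ((m.choose a : ZMod (p ^ 2)) ^ 2 * (m + a).choose a) *
      (p * (harm p (m + a) - 3 * harm p a + 2 * harm p (m - a))) = 0 := by
  set W : ℤ[X] := ∏ i ∈ Finset.range m, (X + C ((i + 1 : ℕ) : ℤ)) with hW
  have hm0 : 0 < m := by have := hp.two_le; omega
  have hWdeg : W.natDegree ≤ m := by
    refine (natDegree_prod_le _ _).trans ?_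
    refine (Finset.sum_le_card_nsmul _ _ 1 fun i _ => natDegree_X_add_C _ |>.le).trans ?_
    simp
  have hG := dvd_sum_derivative hp (W ^ 3)
    (by have := natDegree_pow_le_of_le 3 hWdeg; omega)
  have hG' := p_mul_eq_zero hG
  have hsq := p_sq (p := p)
  have hcast : ∀ a : ℕ, (((derivative (W ^ 3)).eval (a : ℤ) : ℤ) : ZMod (p ^ 2)) =
      aeval (a : ZMod (p ^ 2)) (derivative (W ^ 3)) := by
    intro a
    have := aeval_algebraMap_apply (ZMod (p ^ 2)) (a : ℤ) (derivative (W ^ 3))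
    simpa using this.symm
  have hWa : ∀ x : ℕ, aeval (x : ZMod (p ^ 2)) W = ((x + 1).ascFactorial m : ZMod (p ^ 2)) :=
    aeval_prod_X_add m p
  push_cast only [Int.cast_sum] at hG'
  simp only [hcast] at hG'
  rw [show p = m + 1 + m by omega, Finset.sum_range_add] at hG'
  rw [← show p = m + 1 + m by omega, mul_add, Finset.mul_sum, Finset.mul_sum] at hG'
  have hbig : ∑ i ∈ Finset.range m, (p : ZMod (p ^ 2)) *
      aeval (((m + 1 + i : ℕ)) : ZMod (p ^ 2)) (derivative (W ^ 3)) = 0 := by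
    refine Finset.sum_eq_zero fun i hi => ?_
    have hi : i < m := by simpa using hi
    have hd : p ∣ (m + 1 + i + 1).ascFactorial m := by
      have h1 : p ∣ (m + 1 + i).factorial * (m + 1 + i + 1).ascFactorial m := by
        rw [Nat.factorial_mul_ascFactorial]
        exact hp.dvd_factorial.2 (by omega)
      refine (hp.dvd_mul.1 h1).resolve_left fun h => ?_
      have := hp.dvd_factorial.1 h
      omega
    obtain ⟨x, hx⟩ := hd
    rw [derivative_pow]
    simp only [map_mul, map_pow, hWa, hx]
    push_cast
    rw [mul_pow, hsq]; simp
  rw [hbig, add_zero] at hG'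
  have um := isUnit_factorial_p hp (by omega : m < p)
  apply (um.pow 3).mul_left_cancel
  rw [mul_zero, ← hG', Finset.mul_sum]
  refine Finset.sum_congr rfl fun a ha => ?_
  have ham : a ≤ m := by simp at ha; omega
  -- `W³` at `a + p`, computed by the Taylor formula, is compared below with the value coming
  -- from `ascFactorial_p`.
  have hT := aeval_add_of_sq_eq_zero (W ^ 3) (a : ZMod (p ^ 2)) (p : ZMod (p ^ 2)) hsq
  rw [← Nat.cast_add, map_pow, map_pow, hWa, hWa] at hT
  have f1 : (p + 1).ascFactorial a * (a + p + 1).ascFactorial m =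
      (p + 1).ascFactorial (m + a) := by
    apply Nat.eq_of_mul_eq_mul_left p.factorial_pos
    rw [← mul_assoc, Nat.factorial_mul_ascFactorial, Nat.factorial_mul_ascFactorial, add_comm a p,
      Nat.factorial_mul_ascFactorial, add_assoc, add_comm a m]
  have f2 := Nat.factorial_mul_ascFactorial a m
  have f3 := Nat.add_choose_mul_factorial_mul_factorial m a
  have f1' := congrArg (Nat.cast (R := ZMod (p ^ 2))) f1
  have f2' := congrArg (Nat.cast (R := ZMod (p ^ 2))) f2
  have f3' := congrArg (Nat.cast (R := ZMod (p ^ 2))) f3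
  have g1 := ascFactorial_p hp 1 (by omega : a < p)
  have g2 := ascFactorial_p hp 1 (by omega : m + a < p)
  rw [mul_one] at g1 g2
  rw [add_comm a m] at f2'
  push_cast at f1' f2' f3'
  rw [g1, g2, ← f2'] at f1'
  rw [← f2'] at f3'
  have ua := isUnit_factorial_p hp (by omega : a < p)
  have h1 := neg_one_pow_mul_choose hp hm ham
  have h2 := p_mul_harm_reflect hp hm ham
  have hs : ((-1 : ZMod (p ^ 2)) ^ a) ^ 2 = 1 := by rw [← pow_mul, mul_comm, pow_mul]; simp
  have k1 : (1 + p * harm p a) * ((a + p + 1).ascFactorial m : ZMod (p ^ 2)) =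
      (a + 1).ascFactorial m * (1 + p * harm p (m + a)) := by
    apply ua.mul_left_cancel
    push_cast at f1'
    linear_combination f1'
  have k2 : ((m + a).choose a : ZMod (p ^ 2)) * m.factorial = (a + 1).ascFactorial m := by
    apply ua.mul_left_cancel
    linear_combination f3'
  clear f1' f2' f3' g1 g2 f1 f2 f3 ua um hG' hbig hcast hWa
  generalize aeval (a : ZMod (p ^ 2)) (derivative (W ^ 3)) = D at *
  generalize ((m + a).choose a : ZMod (p ^ 2)) = P at *
  generalize (m.choose a : ZMod (p ^ 2)) = Q at *
  generalize (m.factorial : ZMod (p ^ 2)) = F at *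
  generalize ((a + 1).ascFactorial m : ZMod (p ^ 2)) = U at *
  generalize ((a + p + 1).ascFactorial m : ZMod (p ^ 2)) = V at *
  generalize harm p (m + a) = w at *
  generalize harm p (m - a) = y at *
  generalize harm p a = x at *
  generalize harm p m = z at *
  generalize (-1 : ZMod (p ^ 2)) ^ a = s at *
  generalize (p : ZMod (p ^ 2)) = e at *
  have k3 : V = U * (1 + e * (w - x)) := by
    linear_combination (1 - e * x) * k1 + (x ^ 2 * V - U * x * w) * hsq
  have k4 : e * D = 3 * U ^ 3 * (e * (w - x)) := by
    rw [k3] at hT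
    linear_combination -hT + U ^ 3 * (3 * (w - x) ^ 2 + e * (w - x) ^ 3) * hsq
  have k5 : e * Q = e * s * P := by
    linear_combination -e * h1 + Q * (z - y) * hsq
  have k6 : e * Q ^ 2 = e * P ^ 2 := by
    linear_combination (Q + s * P) * k5 + e * P ^ 2 * hs
  rw [k4, ← k2]
  linear_combination F ^ 3 * P * (w - 3 * x + 2 * y) * k6 - 2 * F ^ 3 * P ^ 3 * h2

theorem cast_apA (R : Type*) [CommRing R] (n : ℕ) : (apA n : R) =
    ∑ b ∈ Finset.range (n + 1), ((n.choose b : R) ^ 2 * ((n + b).choose b : R)) := by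
  rw [apA]; push_cast; rfl

/-- The coefficient of `N` in the first-order term. By `neg_one_pow_mul_choose`, subtracting the left
side from `A(m)` gives `∑ (-1)^a C(m,a) C(m+a,a)²`, which `legendre_reflection` evaluates. -/
theorem sum_index_derivative {p m : ℕ} (hp : p.Prime) (hm : p = 2 * m + 1) :
    ∑ a ∈ Finset.range (m + 1), ((m.choose a : ZMod (p ^ 2)) ^ 2 * (m + a).choose a) *
      (p * (harm p m - harm p (m - a))) = apA m - (-1) ^ m * apA m := by
  have h := congrArg (Int.cast (R := ZMod (p ^ 2))) (legendre_reflection m)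
  push_cast at h
  rw [← cast_apA] at h
  rw [← h, cast_apA, ← Finset.sum_sub_distrib]
  refine Finset.sum_congr rfl fun a ha => ?_
  have := neg_one_pow_mul_choose hp hm (a := a) (by simp at ha; omega)
  linear_combination (m.choose a : ZMod (p ^ 2)) * ((m + a).choose a) * this

/-! ### The congruence -/

/-- The Gessel-type congruence at the central digit `m = (p-1)/2`, with the first-order term made
explicit. -/
theorem apA_add_mul {p m : ℕ} (hp : p.Prime) (hm : p = 2 * m + 1) (N : ℕ) :
    (apA (m + p * N) : ZMod (p ^ 2)) =
      apA N * (apA m + N * (apA m - (-1) ^ m * apA m)) := by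
  have := Fact.mk hp
  have hsq := p_sq (p := p)
  set f : ℕ → ZMod (p ^ 2) := fun k =>
    ((m + p * N).choose k : ZMod (p ^ 2)) ^ 2 * ((m + p * N + k).choose k : ZMod (p ^ 2)) with hf
  have hsplit : (apA (m + p * N) : ZMod (p ^ 2)) =
      ∑ b ∈ Finset.range (N + 1), ∑ a ∈ Finset.range p, f (a + p * b) := by
    rw [← sum_range_mul_split, apA]
    push_cast
    refine Finset.sum_subset (Finset.range_subset_range.2 (by rw [mul_add_one]; omega)) ?_
    intro k _ hk
    rw [Nat.choose_eq_zero_of_lt (by simpa using hk)]; simp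
  -- For `m < a < p` the last digit carries, so `p` divides `C(n, k)`, which occurs squared.
  have hsmall : ∀ b ∈ Finset.range (N + 1), ∑ a ∈ Finset.range p, f (a + p * b) =
      ∑ a ∈ Finset.range (m + 1), f (a + p * b) := by
    intro b _
    symm
    refine Finset.sum_subset (Finset.range_subset_range.2 (by omega)) ?_
    intro a ha ha'
    simp only [Finset.mem_range] at ha ha'
    have hd : p ∣ (m + p * N).choose (a + p * b) := by
      rw [← Nat.modEq_zero_iff_dvd]
      refine (Choose.choose_modEq_choose_mod_mul_choose_div_nat).trans ?_
      rw [Nat.add_mul_mod_self_left, Nat.add_mul_mod_self_left, Nat.mod_eq_of_lt ha,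
        Nat.mod_eq_of_lt (by omega : m < p), Nat.choose_eq_zero_of_lt (by omega), zero_mul]
    obtain ⟨x, hx⟩ := hd
    simp only [hf, hx]
    push_cast
    rw [mul_pow, hsq]; simp
  set c : ℕ → ZMod (p ^ 2) := fun a =>
    (m.choose a : ZMod (p ^ 2)) ^ 2 * ((m + a).choose a : ZMod (p ^ 2)) with hc
  set g : ℕ → ZMod (p ^ 2) := fun a =>
    (p : ZMod (p ^ 2)) * (harm p m - harm p (m - a)) with hg
  set v : ℕ → ZMod (p ^ 2) := fun a =>
    (p : ZMod (p ^ 2)) * (harm p (m + a) - 3 * harm p a + 2 * harm p (m - a)) with hv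
  have hterm : ∀ b ∈ Finset.range (N + 1), ∀ a ∈ Finset.range (m + 1), f (a + p * b) =
      ((N.choose b : ZMod (p ^ 2)) ^ 2 * (N + b).choose b) *
        (c a + N * (c a * g a) + b * (c a * v a)) := by
    intro b hb a ha
    obtain ⟨d, rfl⟩ : ∃ d, N = b + d := ⟨N - b, by simp at hb; omega⟩
    obtain ⟨y, rfl⟩ : ∃ y, m = a + y := ⟨m - a, by simp at ha; omega⟩
    have h1 := choose_mod_p_sq hp (a := a) (c := y) b d (by omega)
    have h2 := choose_mod_p_sq hp (a := a) (c := a + y) b (b + d) (by omega)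
    have h3 := p_mul_harm_reflect hp hm (Nat.le_add_right a y)
    rw [Nat.add_sub_cancel_left] at h3
    simp only [hf, hc, hg, hv, Nat.add_sub_cancel_left]
    rw [show a + y + p * (b + d) + (a + p * b) = a + (a + y) + p * (b + (b + d)) by ring, h1, h2,
      add_comm (b + d) b]
    rw [add_comm (a + y) a] at h3 ⊢
    push_cast
    generalize ((a + (a + y)).choose a : ZMod (p ^ 2)) = P at *
    generalize ((a + y).choose a : ZMod (p ^ 2)) = Q at *
    generalize ((b + d).choose b : ZMod (p ^ 2)) = B at *
    generalize ((b + (b + d)).choose b : ZMod (p ^ 2)) = B' at *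
    generalize harm p (a + (a + y)) = w at *
    generalize harm p (a + y) = z at *
    generalize harm p a = x at *
    generalize harm p y = h at *
    generalize (p : ZMod (p ^ 2)) = e at *
    generalize (b : ZMod (p ^ 2)) = β at *
    generalize (d : ZMod (p ^ 2)) = δ at *
    set X := (β + δ) * z - β * x - δ * h
    set Y := (β + (β + δ)) * w - β * x - (β + δ) * z
    have key : (1 + e * X) ^ 2 * (1 + e * Y) = 1 + e * (2 * X + Y) := by
      linear_combination (X ^ 2 + 2 * X * Y + e * X ^ 2 * Y) * hsq
    linear_combination B ^ 2 * B' * Q ^ 2 * P * key + B ^ 2 * B' * Q ^ 2 * P * (β + δ) * h3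
  have hS2 : ∑ a ∈ Finset.range (m + 1), c a * v a = 0 := sum_harm_eq_zero hp hm
  have hS1 : ∑ a ∈ Finset.range (m + 1), c a * g a = apA m - (-1) ^ m * apA m :=
    sum_index_derivative hp hm
  rw [hsplit, Finset.sum_congr rfl hsmall,
    Finset.sum_congr rfl fun b hb => Finset.sum_congr rfl (hterm b hb), cast_apA _ N, Finset.sum_mul]
  refine Finset.sum_congr rfl fun b _ => ?_
  rw [← Finset.mul_sum, Finset.sum_add_distrib, Finset.sum_add_distrib, ← Finset.mul_sum,
    ← Finset.mul_sum, hS2, hS1, cast_apA _ m]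
  ring

/-- For primes `p ≥ 5`: `A((p^r−1)/2) ≡ A((p−1)/2)^r (mod p²)`. -/
theorem apA_pow_congruence (p : ℕ) (hp : p.Prime) (hp5 : 5 ≤ p)
    (r : ℕ) (hr : 1 ≤ r) :
    apA ((p ^ r - 1) / 2) ≡ apA ((p - 1) / 2) ^ r [ZMOD (p : ℤ) ^ 2] := by
  obtain ⟨m, hm⟩ : ∃ m, p = 2 * m + 1 := hp.odd_of_ne_two (by omega)
  have hpm : (p - 1) / 2 = m := by omega
  rw [hpm, show ((p : ℤ) ^ 2) = ((p ^ 2 : ℕ) : ℤ) by push_cast; rfl,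
    ← ZMod.intCast_eq_intCast_iff]
  push_cast
  induction r, hr using Nat.le_induction with
  | base => simp [hpm]
  | succ r hr ih =>
    obtain ⟨N, hN⟩ : ∃ N, p ^ r = 2 * N + 1 := Odd.pow ⟨m, hm⟩
    have hn : (p ^ (r + 1) - 1) / 2 = m + p * N := by
      have : p ^ (r + 1) = 2 * (m + p * N) + 1 := by
        rw [pow_succ, hN]; nlinarith
      omega
    have hNr : (p ^ r - 1) / 2 = N := by omega
    rw [hNr] at ih
    rw [hn, apA_add_mul hp hm, ih]
    obtain ⟨s, rfl⟩ : ∃ s, r = s + 1 := ⟨r - 1, by omega⟩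
    rcases neg_one_pow_eq_or (ZMod (p ^ 2)) m with h | h
    · rw [h]; ring
    · rw [h]
      -- Here `2 A(m)` is a multiple of `p`, so its square vanishes.
      have h2 : 2 * (apA m : ZMod (p ^ 2)) ^ 2 = 0 := by
        have hs := sum_index_derivative hp hm
        rw [h] at hs
        simp only [mul_left_comm _ (p : ZMod (p ^ 2)), ← Finset.mul_sum] at hs
        obtain ⟨t, hs⟩ : ∃ t, (p : ZMod (p ^ 2)) * t = apA m - -1 * apA m := ⟨_, hs⟩
        apply (isUnit_factorial_p hp (by omega : 2 < p)).mul_left_cancel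
        push_cast [Nat.factorial]
        linear_combination t ^ 2 * p_sq (p := p) -
          (p * t + 2 * (apA m : ZMod (p ^ 2))) * hs
      linear_combination (N : ZMod (p ^ 2)) * (apA m : ZMod (p ^ 2)) ^ s * h2
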